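/- arXiv:1305.6420 — 3 statements merged into one kernel-verified Lean document; each statement's English description precedes it below -/
import Mathlib

section
/- Let X, Y₁, …, Y_m be Banach spaces over ℝ and let Y = Y₁ ⊕_∞ ⋯ ⊕_∞ Y_m be their ℓ∞-sum (the product Y₁ × ⋯ × Y_m with the maximum norm). Then the pair (X, Y) has the Bishop–Phelps–Bollobás property if and only if the pair (X, Y_j) has the Bishop–Phelps–Bollobás property for every j = 1, …, m. -/
open scoped ENNReal

/-- A pair `(X, Y)` of normed spaces has the Bishop–Phelps–Bollobás property with the
function `η : (0,1) → (0,∞)` (encoded as `η : ℝ → ℝ`, relevant only on `(0,1)`). -/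
def BPBpWith (X Y : Type*) [NormedAddCommGroup X] [NormedSpace ℝ X]
    [NormedAddCommGroup Y] [NormedSpace ℝ Y] (η : ℝ → ℝ) : Prop :=
  ∀ ε ∈ Set.Ioo (0 : ℝ) 1, ∀ (T₀ : X →L[ℝ] Y) (x₀ : X),
    ‖T₀‖ = 1 → ‖x₀‖ = 1 → 1 - η ε < ‖T₀ x₀‖ →
      ∃ (S : X →L[ℝ] Y) (x : X),
        ‖x‖ = 1 ∧ ‖S‖ = 1 ∧ ‖S x‖ = 1 ∧ ‖x - x₀‖ < ε ∧ ‖S - T₀‖ < ε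

/-- The pair `(X, Y)` has the Bishop–Phelps–Bollobás property. -/
def HasBPBp (X Y : Type*) [NormedAddCommGroup X] [NormedSpace ℝ X]
    [NormedAddCommGroup Y] [NormedSpace ℝ Y] : Prop :=
  ∃ η : ℝ → ℝ, (∀ ε ∈ Set.Ioo (0 : ℝ) 1, 0 < η ε) ∧ BPBpWith X Y η

/-!
An operator `T` into `Y₁ ⊕_∞ ⋯ ⊕_∞ Y_m` is a tuple of operators `T_j`, with norm `max_j ‖T_j‖`.

If the sum has the BPBp, regard `T : X → Y_j` as an operator into the sum whose other coordinates
vanish. Every approximating operator has its other coordinates of norm `< ε < 1`, so it can only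
attain its norm `1` in the coordinate `j`, and the same function `η` works for `Y_j`.

Conversely, if `‖T x₀‖` is close to `1`, then `‖T_j x₀‖` is equally close to `1` for some `j`.
Normalizing `T_j` moves it by `1 - ‖T_j‖`, which is small, so the BPBp of `(X, Y_j)` provides a
norm-attaining operator close to `T_j`. Substituting it for the coordinate `j` of `T` leaves the
norm equal to `1`, since no other coordinate of `T` has norm exceeding `1`.
-/

section Pi

variable {𝕜 E ι : Type*} {F : ι → Type*} [NontriviallyNormedField 𝕜]
  [SeminormedAddCommGroup E] [NormedSpace 𝕜 E]
  [∀ i, SeminormedAddCommGroup (F i)] [∀ i, NormedSpace 𝕜 (F i)]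

section UpdateCoord

variable [DecidableEq ι]

/-- The operator obtained from `T : E →L[𝕜] ∀ i, F i` by substituting `R` for its coordinate `j`.
It is written as a perturbation of `T`, so that its distance to `T` is visibly that of `R` to the
coordinate it replaces. -/
def updateCoord (T : E →L[𝕜] ∀ i, F i) (j : ι) (R : E →L[𝕜] F j) : E →L[𝕜] ∀ i, F i :=
  T + .single 𝕜 F j ∘L (R - .proj j ∘L T)

lemma proj_comp_updateCoord_self (T : E →L[𝕜] ∀ i, F i) (j : ι) (R : E →L[𝕜] F j) :
    .proj j ∘L updateCoord T j R = R := by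
  ext x
  simp [updateCoord]

lemma proj_comp_updateCoord_of_ne (T : E →L[𝕜] ∀ i, F i) {i j : ι} (hij : i ≠ j)
    (R : E →L[𝕜] F j) : .proj i ∘L updateCoord T j R = .proj i ∘L T := by
  ext x
  simp [updateCoord, hij]

end UpdateCoord

variable [Fintype ι]

lemma opNorm_le_iff_forall_opNorm_proj_comp_le (T : E →L[𝕜] ∀ i, F i) {C : ℝ} (hC : 0 ≤ C) :
    ‖T‖ ≤ C ↔ ∀ i, ‖.proj i ∘L T‖ ≤ C := by
  have h_coord (x : E) : ‖T x‖ ≤ C * ‖x‖ ↔ ∀ i, ‖T x i‖ ≤ C * ‖x‖ :=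
    pi_norm_le_iff_of_nonneg (by positivity)
  simp only [ContinuousLinearMap.opNorm_le_iff hC, h_coord]
  exact forall_comm

lemma opNorm_proj_comp_le (T : E →L[𝕜] ∀ i, F i) (i : ι) : ‖.proj i ∘L T‖ ≤ ‖T‖ :=
  (opNorm_le_iff_forall_opNorm_proj_comp_le T (norm_nonneg T)).1 le_rfl i

lemma opNorm_updateCoord_le [DecidableEq ι] {T : E →L[𝕜] ∀ i, F i} {j : ι} {R : E →L[𝕜] F j}
    {C : ℝ} (hT : ‖T‖ ≤ C) (hR : ‖R‖ ≤ C) : ‖updateCoord T j R‖ ≤ C := by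
  refine (opNorm_le_iff_forall_opNorm_proj_comp_le _ ((norm_nonneg T).trans hT)).2 fun i => ?_
  obtain rfl | hij := eq_or_ne i j
  · rwa [proj_comp_updateCoord_self]
  · rw [proj_comp_updateCoord_of_ne T hij]
    exact (opNorm_proj_comp_le T i).trans hT

end Pi

section PiNormed

variable {𝕜 E ι : Type*} {F : ι → Type*} [Fintype ι] [DecidableEq ι]
  [NontriviallyNormedField 𝕜] [SeminormedAddCommGroup E] [NormedSpace 𝕜 E]
  [∀ i, NormedAddCommGroup (F i)] [∀ i, NormedSpace 𝕜 (F i)]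

lemma opNorm_single_comp (j : ι) (T : E →L[𝕜] F j) : ‖.single 𝕜 F j ∘L T‖ = ‖T‖ :=
  ContinuousLinearMap.opNorm_ext _ _ fun x => Pi.norm_single (T x)

lemma opNorm_updateCoord_sub (T : E →L[𝕜] ∀ i, F i) (j : ι) (R : E →L[𝕜] F j) :
    ‖updateCoord T j R - T‖ = ‖R - .proj j ∘L T‖ := by
  rw [updateCoord, add_sub_cancel_left, opNorm_single_comp]

end PiNormed

lemma opNorm_eq_and_norm_apply_eq_of_le {𝕜 E F : Type*} [NontriviallyNormedField 𝕜]
    [SeminormedAddCommGroup E] [NormedSpace 𝕜 E] [SeminormedAddCommGroup F] [NormedSpace 𝕜 F]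
    {f : E →L[𝕜] F} {x : E} {C : ℝ} (hx : ‖x‖ ≤ 1) (hf : ‖f‖ ≤ C) (hfx : C ≤ ‖f x‖) :
    ‖f‖ = C ∧ ‖f x‖ = C :=
  have apply_le : ‖f x‖ ≤ ‖f‖ := f.unit_le_opNorm x hx
  ⟨hf.antisymm (hfx.trans apply_le), (apply_le.trans hf).antisymm hfx⟩

lemma norm_inv_norm_smul_sub_self {E : Type*} [SeminormedAddCommGroup E] [NormedSpace ℝ E]
    {x : E} (hx : ‖x‖ ≠ 0) : ‖‖x‖⁻¹ • x - x‖ = |1 - ‖x‖| := by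
  calc ‖‖x‖⁻¹ • x - x‖ = ‖(‖x‖⁻¹ - 1) • x‖ := by rw [sub_smul, one_smul]
    _ = |(‖x‖⁻¹ - 1) * ‖x‖| := by rw [norm_smul, Real.norm_eq_abs, abs_mul, abs_norm]
    _ = |1 - ‖x‖| := by rw [sub_mul, inv_mul_cancel₀ hx, one_mul]

section BPBp

variable {X : Type*} [NormedAddCommGroup X] [NormedSpace ℝ X]

section Pair

variable {Y Z : Type*} [NormedAddCommGroup Y] [NormedSpace ℝ Y]
  [NormedAddCommGroup Z] [NormedSpace ℝ Z] {η η' : ℝ → ℝ}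

lemma BPBpWith.mono (h : BPBpWith X Y η) (hη : ∀ ε ∈ Set.Ioo (0 : ℝ) 1, η' ε ≤ η ε) :
    BPBpWith X Y η' := fun ε hε T x₀ hT hx₀ hTx₀ =>
  h ε hε T x₀ hT hx₀ (by linarith [hη ε hε])

lemma BPBpWith.map_linearIsometryEquiv (h : BPBpWith X Y η) (e : Y ≃ₗᵢ[ℝ] Z) :
    BPBpWith X Z η := by
  intro ε hε T x₀ hT hx₀ hTx₀
  let eL : Y →L[ℝ] Z := e.toLinearIsometry.toContinuousLinearMap
  let eL' : Z →L[ℝ] Y := e.symm.toLinearIsometry.toContinuousLinearMap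
  have norm_comp (A : X →L[ℝ] Y) : ‖eL ∘L A‖ = ‖A‖ :=
    e.toLinearIsometry.norm_toContinuousLinearMap_comp
  have comp_comp_symm : eL ∘L (eL' ∘L T) = T := by
    ext x
    exact e.apply_symm_apply (T x)
  obtain ⟨S, x, hx, hS, hSx, hxx₀, hST⟩ := h ε hε (eL' ∘L T) x₀
    (by rw [← norm_comp, comp_comp_symm, hT]) hx₀
    (hTx₀.trans_eq (e.symm.norm_map (T x₀)).symm)
  refine ⟨eL ∘L S, x, hx, by rw [norm_comp, hS], (e.norm_map (S x)).trans hSx, hxx₀, ?_⟩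
  calc ‖eL ∘L S - T‖ = ‖eL ∘L (S - eL' ∘L T)‖ := by
        rw [ContinuousLinearMap.comp_sub, comp_comp_symm]
    _ = ‖S - eL' ∘L T‖ := norm_comp _
    _ < ε := hST

lemma hasBPBp_congr_right (e : Y ≃ₗᵢ[ℝ] Z) : HasBPBp X Y ↔ HasBPBp X Z :=
  ⟨fun ⟨η, hη, h⟩ => ⟨η, hη, h.map_linearIsometryEquiv e⟩,
    fun ⟨η, hη, h⟩ => ⟨η, hη, h.map_linearIsometryEquiv e.symm⟩⟩

lemma BPBpWith.exists_of_opNorm_le_one (h : BPBpWith X Y η) {ε : ℝ}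
    (hε : ε ∈ Set.Ioo (0 : ℝ) 1) {T : X →L[ℝ] Y} {x₀ : X} (hT : ‖T‖ ≤ 1) (hx₀ : ‖x₀‖ = 1)
    (hTx₀ : 1 - η ε < ‖T x₀‖) (hTx₀ε : 1 - ε < ‖T x₀‖) :
    ∃ (S : X →L[ℝ] Y) (x : X),
      ‖x‖ = 1 ∧ ‖S‖ = 1 ∧ ‖S x‖ = 1 ∧ ‖x - x₀‖ < ε ∧ ‖S - T‖ < 2 * ε := by
  have apply_le : ‖T x₀‖ ≤ ‖T‖ := T.unit_le_opNorm x₀ hx₀.le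
  have norm_pos : 0 < ‖T‖ := by linarith [hε.2]
  have norm_normalized : ‖‖T‖⁻¹ • T‖ = 1 := norm_smul_inv_norm (norm_pos_iff.1 norm_pos)
  have apply_le_normalized : ‖T x₀‖ ≤ ‖(‖T‖⁻¹ • T) x₀‖ := by
    rw [smul_apply, norm_smul, norm_inv, norm_norm]
    exact le_mul_of_one_le_left (norm_nonneg _) ((one_le_inv₀ norm_pos).2 hT)
  have normalized_sub : ‖‖T‖⁻¹ • T - T‖ < ε := by
    rw [norm_inv_norm_smul_sub_self norm_pos.ne', abs_of_nonneg (sub_nonneg.2 hT)]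
    linarith
  obtain ⟨S, x, hx, hS, hSx, hxx₀, hST⟩ := h ε hε (‖T‖⁻¹ • T) x₀ norm_normalized hx₀
    (hTx₀.trans_le apply_le_normalized)
  refine ⟨S, x, hx, hS, hSx, hxx₀, ?_⟩
  linarith [norm_sub_le_norm_sub_add_norm_sub S (‖T‖⁻¹ • T) T]

end Pair

section Family

variable {ι : Type*} {Y : ι → Type*}
  [∀ j, NormedAddCommGroup (Y j)] [∀ j, NormedSpace ℝ (Y j)]

lemma exists_forall_bpbpWith [Finite ι] (h : ∀ j, HasBPBp X (Y j)) :
    ∃ η : ℝ → ℝ, (∀ ε ∈ Set.Ioo (0 : ℝ) 1, 0 < η ε) ∧ ∀ j, BPBpWith X (Y j) η := by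
  choose η η_pos hη using h
  have exists_lower_bound (ε : ℝ) (hε : ε ∈ Set.Ioo (0 : ℝ) 1) :
      ∃ δ : ℝ, 0 < δ ∧ ∀ j, δ ≤ η j ε := by
    have eventually_le : ∀ᶠ δ in nhdsWithin (0 : ℝ) (Set.Ioi 0), ∀ j, δ ≤ η j ε :=
      Filter.eventually_all.2 fun j => nhdsWithin_le_nhds (Iic_mem_nhds (η_pos j ε hε))
    exact (eventually_mem_nhdsWithin.and eventually_le).exists
  choose! δ δ_pos δ_le using exists_lower_bound
  exact ⟨δ, δ_pos, fun j => (hη j).mono fun ε hε => δ_le ε hε j⟩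

variable [Fintype ι] {η : ℝ → ℝ}

lemma BPBpWith.of_pi (h : BPBpWith X (∀ i, Y i) η) (j : ι) : BPBpWith X (Y j) η := by
  classical
  intro ε hε T x₀ hT hx₀ hTx₀
  let T₀ : X →L[ℝ] ∀ i, Y i := .single ℝ Y j ∘L T
  obtain ⟨S, x, hx, hS, hSx, hxx₀, hST⟩ := h ε hε T₀ x₀
    ((opNorm_single_comp j T).trans hT) hx₀ (hTx₀.trans_eq (Pi.norm_single (T x₀)).symm)
  let Sj : X →L[ℝ] Y j := .proj j ∘L S
  have apply_lt_one (i : ι) (hij : i ≠ j) : ‖S x i‖ < 1 := by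
    have T₀_apply : T₀ x i = 0 := Pi.single_eq_of_ne hij (T x)
    calc ‖S x i‖ = ‖(S - T₀) x i‖ := by
          rw [sub_apply, Pi.sub_apply, T₀_apply, sub_zero]
      _ ≤ ‖(S - T₀) x‖ := norm_le_pi_norm _ i
      _ ≤ ‖S - T₀‖ := (S - T₀).unit_le_opNorm x hx.le
      _ < 1 := hST.trans hε.2
  have one_le_norm_apply : 1 ≤ ‖Sj x‖ := by
    by_contra! apply_j_lt_one
    refine hSx.not_lt ((pi_norm_lt_iff one_pos).2 fun i => ?_)
    obtain rfl | hij := eq_or_ne i j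
    exacts [apply_j_lt_one, apply_lt_one i hij]
  have proj_comp_T₀ : .proj j ∘L T₀ = T := by
    ext y
    exact Pi.single_eq_same j (T y)
  obtain ⟨hSj, hSjx⟩ := opNorm_eq_and_norm_apply_eq_of_le hx.le
    ((opNorm_proj_comp_le S j).trans hS.le) one_le_norm_apply
  refine ⟨Sj, x, hx, hSj, hSjx, hxx₀, ?_⟩
  calc ‖Sj - T‖ = ‖.proj j ∘L (S - T₀)‖ := by
        rw [ContinuousLinearMap.comp_sub, proj_comp_T₀]
    _ ≤ ‖S - T₀‖ := opNorm_proj_comp_le _ j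
    _ < ε := hST

lemma BPBpWith.pi (h : ∀ j, BPBpWith X (Y j) η) :
    BPBpWith X (∀ i, Y i) fun ε => min (η (ε / 2)) (ε / 2) := by
  classical
  intro ε hε T x₀ hT hx₀ hTx₀
  have half_mem : ε / 2 ∈ Set.Ioo (0 : ℝ) 1 := ⟨half_pos hε.1, by linarith [hε.1, hε.2]⟩
  obtain ⟨j, hj⟩ : ∃ j, 1 - min (η (ε / 2)) (ε / 2) < ‖T x₀ j‖ := by
    by_contra! hle
    have bound_nonneg : 0 ≤ 1 - min (η (ε / 2)) (ε / 2) := by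
      linarith [min_le_right (η (ε / 2)) (ε / 2), half_mem.2]
    exact hTx₀.not_ge ((pi_norm_le_iff_of_nonneg bound_nonneg).2 hle)
  obtain ⟨R, x, hx, hR, hRx, hxx₀, hRT⟩ :=
    (h j).exists_of_opNorm_le_one half_mem ((opNorm_proj_comp_le T j).trans hT.le) hx₀
      ((sub_le_sub_left (min_le_left _ _) 1).trans_lt hj)
      ((sub_le_sub_left (min_le_right _ _) 1).trans_lt hj)
  have one_le_norm_apply : 1 ≤ ‖updateCoord T j R x‖ := by
    calc 1 = ‖(.proj j ∘L updateCoord T j R) x‖ := by rw [proj_comp_updateCoord_self, hRx]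
      _ ≤ ‖updateCoord T j R x‖ := norm_le_pi_norm (updateCoord T j R x) j
  obtain ⟨hS, hSx⟩ := opNorm_eq_and_norm_apply_eq_of_le hx.le
    (opNorm_updateCoord_le hT.le hR.le) one_le_norm_apply
  refine ⟨updateCoord T j R, x, hx, hS, hSx, hxx₀.trans (half_lt_self hε.1), ?_⟩
  calc ‖updateCoord T j R - T‖ = ‖R - .proj j ∘L T‖ := opNorm_updateCoord_sub T j R
    _ < 2 * (ε / 2) := hRT
    _ = ε := mul_div_cancel₀ ε two_ne_zero

lemma hasBPBp_pi_iff : HasBPBp X (∀ i, Y i) ↔ ∀ j, HasBPBp X (Y j) := by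
  refine ⟨fun ⟨η, η_pos, h⟩ j => ⟨η, η_pos, h.of_pi j⟩, fun h => ?_⟩
  obtain ⟨η, η_pos, hη⟩ := exists_forall_bpbpWith h
  refine ⟨_, fun ε hε => lt_min (η_pos _ ⟨?_, ?_⟩) (half_pos hε.1), BPBpWith.pi hη⟩ <;>
    linarith [hε.1, hε.2]

end Family

end BPBp

theorem hasBPBp_finite_linfty_sum_range_iff_general
    {ι : Type*} [Fintype ι] (X : Type*) (Y : ι → Type*)
    [NormedAddCommGroup X] [NormedSpace ℝ X]
    [∀ j, NormedAddCommGroup (Y j)] [∀ j, NormedSpace ℝ (Y j)] :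
    HasBPBp X (PiLp ∞ Y) ↔ ∀ j, HasBPBp X (Y j) :=
  (hasBPBp_congr_right (PiLp.equivₗᵢ Y)).trans hasBPBp_pi_iff

/-- For finitely many Banach spaces `Y₁, …, Y_m`, the pair `(X, Y₁ ⊕_∞ ⋯ ⊕_∞ Y_m)` has the
BPBp if and only if every pair `(X, Yⱼ)` has the BPBp. -/
theorem hasBPBp_finite_linfty_sum_range_iff
    {m : ℕ} (X : Type*) (Y : Fin m → Type*)
    [NormedAddCommGroup X] [NormedSpace ℝ X] [CompleteSpace X]
    [∀ j, NormedAddCommGroup (Y j)] [∀ j, NormedSpace ℝ (Y j)] [∀ j, CompleteSpace (Y j)] :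
    HasBPBp X (PiLp ∞ Y) ↔ ∀ j, HasBPBp X (Y j) :=
  hasBPBp_finite_linfty_sum_range_iff_general X Y
end

section
/- Let {Y_j}_{j∈J} be a family of Banach spaces over ℝ, let Y = [⊕_{j∈J} Y_j]_{ℓ1} be their ℓ1-sum, and let X be a Banach space over ℝ. If the pair (X,Y) has the Bishop–Phelps–Bollobás property with a function η : (0,1) → (0,∞), then for every j ∈ J the pair (X, Y_j) also has the Bishop–Phelps–Bollobás property with the same function η. -/
open scoped ENNReal

/-!
The coordinate inclusion `ι : Y j → ℓ¹(Y)` carries `T₀` to an operator into the sum, which the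
hypothesis approximates by a norm-one operator `S` attaining its norm at some `x`. The coordinate
projection need not preserve `‖S x‖`, so one uses instead the norm-one retraction
`L z = z j + φ (z - ι (z j)) • u`, where `φ` is a norming functional of the part of `S x` off the
coordinate `j` and `u` is a unit vector in the direction of `(S x) j` (any unit vector if this is
zero). The norm of `ℓ¹(Y)` adds up over the two parts, hence `‖L (S x)‖ = ‖S x‖`, and `L ∘ S` is
the operator sought.
-/

theorem exists_norm_eq_one_and_norm_smul_eq (𝕜 : Type*) {E : Type*} [RCLike 𝕜]
    [NormedAddCommGroup E] [NormedSpace 𝕜 E] [Nontrivial E] (y : E) :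
    ∃ u : E, ‖u‖ = 1 ∧ (‖y‖ : 𝕜) • u = y := by
  rcases eq_or_ne y 0 with rfl | hy
  · obtain ⟨v, hv⟩ := exists_ne (0 : E)
    exact ⟨(‖v‖⁻¹ : 𝕜) • v, norm_smul_inv_norm hv, by simp⟩
  · have hy' : (‖y‖ : 𝕜) ≠ 0 := by simpa using hy
    exact ⟨(‖y‖⁻¹ : 𝕜) • y, norm_smul_inv_norm hy, smul_inv_smul₀ hy' y⟩

section LSummand

variable {Y Z : Type*} [NormedAddCommGroup Y] [NormedAddCommGroup Z]

section NormedField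

variable {𝕜 : Type*} [NormedField 𝕜] [NormedSpace 𝕜 Y] [NormedSpace 𝕜 Z]

/-- `Y` is an L-summand of `Z` with inclusion `ι` and projection `π`. The summand is given by a map
into `Z` rather than as a subspace, so that the coordinate spaces of an `ℓ¹`-sum are L-summands of
it. It follows that `ι` is isometric and that `ι ∘ π` is an L-projection (`IsLprojection`). -/
structure IsLSummand (ι : Y →L[𝕜] Z) (π : Z →L[𝕜] Y) : Prop where
  leftInverse : Function.LeftInverse π ι
  norm_eq_add : ∀ z, ‖z‖ = ‖π z‖ + ‖z - ι (π z)‖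

/-- The projection `π`, corrected along `u` by the value of `φ` on the part `z - ι (π z)` that `π`
kills. For suitable `φ` and `u` it keeps the norm of a prescribed vector, which `π` need not do. -/
def tiltedProjection (ι : Y →L[𝕜] Z) (π : Z →L[𝕜] Y) (φ : StrongDual 𝕜 Z) (u : Y) : Z →L[𝕜] Y :=
  π + (φ ∘L (.id 𝕜 Z - ι ∘L π)).smulRight u

theorem tiltedProjection_apply (ι : Y →L[𝕜] Z) (π : Z →L[𝕜] Y) (φ : StrongDual 𝕜 Z) (u : Y)
    (z : Z) : tiltedProjection ι π φ u z = π z + φ (z - ι (π z)) • u :=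
  rfl

variable {ι : Y →L[𝕜] Z} {π : Z →L[𝕜] Y}

theorem IsLSummand.norm_inclusion (hY : IsLSummand ι π) (y : Y) : ‖ι y‖ = ‖y‖ := by
  simpa only [hY.leftInverse y, sub_self, norm_zero, add_zero] using hY.norm_eq_add (ι y)

theorem IsLSummand.leftInverse_tiltedProjection (hY : IsLSummand ι π) (φ : StrongDual 𝕜 Z) (u : Y) :
    Function.LeftInverse (tiltedProjection ι π φ u) ι := by
  intro y
  rw [tiltedProjection_apply, hY.leftInverse y, sub_self, map_zero, zero_smul, add_zero]

end NormedField

theorem IsLSummand.norm_tiltedProjection_le_one {𝕜 : Type*} [NontriviallyNormedField 𝕜]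
    [NormedSpace 𝕜 Y] [NormedSpace 𝕜 Z] {ι : Y →L[𝕜] Z} {π : Z →L[𝕜] Y} (hY : IsLSummand ι π)
    {φ : StrongDual 𝕜 Z} (hφ : ‖φ‖ ≤ 1) {u : Y} (hu : ‖u‖ ≤ 1) :
    ‖tiltedProjection ι π φ u‖ ≤ 1 := by
  refine ContinuousLinearMap.opNorm_le_bound _ zero_le_one fun z => ?_
  calc ‖tiltedProjection ι π φ u z‖
      ≤ ‖π z‖ + ‖φ (z - ι (π z)) • u‖ := norm_add_le _ _
    _ = ‖π z‖ + ‖φ (z - ι (π z))‖ * ‖u‖ := by rw [norm_smul]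
    _ ≤ ‖π z‖ + 1 * ‖z - ι (π z)‖ * 1 := by
      gcongr
      exact φ.le_of_opNorm_le hφ _
    _ = 1 * ‖z‖ := by rw [mul_one, one_mul, one_mul, ← hY.norm_eq_add]

theorem IsLSummand.exists_retraction_norm_apply_eq {𝕜 : Type*} [RCLike 𝕜] [NormedSpace 𝕜 Y]
    [NormedSpace 𝕜 Z] [Nontrivial Y] {ι : Y →L[𝕜] Z} {π : Z →L[𝕜] Y} (hY : IsLSummand ι π) (z : Z) :
    ∃ L : Z →L[𝕜] Y, ‖L‖ ≤ 1 ∧ Function.LeftInverse L ι ∧ ‖L z‖ = ‖z‖ := by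
  obtain ⟨u, hu, hzu⟩ := exists_norm_eq_one_and_norm_smul_eq 𝕜 (π z)
  obtain ⟨φ, hφ, hφz⟩ := exists_dual_vector'' 𝕜 (z - ι (π z))
  refine ⟨tiltedProjection ι π φ u, hY.norm_tiltedProjection_le_one hφ hu.le,
    hY.leftInverse_tiltedProjection φ u, ?_⟩
  have hz : tiltedProjection ι π φ u z = (‖z‖ : 𝕜) • u := by
    rw [tiltedProjection_apply, hφz, hY.norm_eq_add z, RCLike.ofReal_add, add_smul, hzu]
  rw [hz, norm_smul, hu, mul_one, RCLike.norm_ofReal, abs_norm]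

end LSummand

theorem isLSummand_lp_single (𝕜 : Type*) {J : Type*} [DecidableEq J] (Y : J → Type*)
    [NormedField 𝕜] [∀ j, NormedAddCommGroup (Y j)] [∀ j, NormedSpace 𝕜 (Y j)] (j : J) :
    IsLSummand (lp.singleContinuousLinearMap 𝕜 Y 1 j) (lp.evalCLM 𝕜 Y 1 j) where
  leftInverse := lp.single_apply_self 1 j
  norm_eq_add z := by
    have hz : ‖z‖ - ‖z - lp.single 1 j (z j)‖ = ‖z j‖ := by
      simpa only [ENNReal.toReal_one, Real.rpow_one, Finset.sum_singleton] using
        lp.norm_sub_norm_compl_sub_single (by simp) z {j}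
    exact sub_eq_iff_eq_add.mp hz

section BishopPhelpsBollobas

variable {X Y Z : Type*} [NormedAddCommGroup X] [NormedSpace ℝ X]
  [NormedAddCommGroup Y] [NormedSpace ℝ Y] [NormedAddCommGroup Z] [NormedSpace ℝ Z] {η : ℝ → ℝ}

theorem BPBpWith.of_subsingleton [Subsingleton Y] : BPBpWith X Y η := by
  intro _ _ T₀ _ hT₀
  rw [Subsingleton.elim T₀ 0, norm_zero] at hT₀
  exact absurd hT₀ zero_ne_one

theorem BPBpWith.of_retractions (ι : Y →ₗᵢ[ℝ] Z)
    (hι : ∀ z, ∃ L : Z →L[ℝ] Y, ‖L‖ ≤ 1 ∧ Function.LeftInverse L ι ∧ ‖L z‖ = ‖z‖)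
    (h : BPBpWith X Z η) : BPBpWith X Y η := by
  intro ε hε T₀ x₀ hT₀ hx₀ hTx₀
  obtain ⟨S, x, hx, hS, hSx, hxx₀, hST₀⟩ := h ε hε (ι.toContinuousLinearMap ∘L T₀) x₀
    (ι.norm_toContinuousLinearMap_comp.trans hT₀) hx₀ (hTx₀.trans_eq (ι.norm_map _).symm)
  obtain ⟨L, hL, hLι, hLSx⟩ := hι (S x)
  have norm_comp_le (R : X →L[ℝ] Z) : ‖L ∘L R‖ ≤ ‖R‖ :=
    (L.opNorm_comp_le R).trans (mul_le_of_le_one_left (norm_nonneg R) hL)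
  have norm_LSx : ‖(L ∘L S) x‖ = 1 := hLSx.trans hSx
  have one_le_norm_LS : 1 ≤ ‖L ∘L S‖ := by
    simpa only [norm_LSx, hx, mul_one] using (L ∘L S).le_opNorm x
  have LS_sub_T₀ : L ∘L S - T₀ = L ∘L (S - ι.toContinuousLinearMap ∘L T₀) := by
    ext v
    simp [hLι (T₀ v)]
  refine ⟨L ∘L S, x, hx, ((norm_comp_le S).trans_eq hS).antisymm one_le_norm_LS, norm_LSx, hxx₀, ?_⟩
  rw [LS_sub_T₀]
  exact (norm_comp_le _).trans_lt hST₀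

theorem BPBpWith.of_isLSummand {ι : Y →L[ℝ] Z} {π : Z →L[ℝ] Y} (hY : IsLSummand ι π)
    (h : BPBpWith X Z η) : BPBpWith X Y η := by
  rcases subsingleton_or_nontrivial Y with _ | _
  · exact .of_subsingleton
  · exact h.of_retractions ⟨ι.toLinearMap, hY.norm_inclusion⟩ hY.exists_retraction_norm_apply_eq

end BishopPhelpsBollobas

theorem bpbp_of_l1_sum_range_general {J X : Type*} {Y : J → Type*}
    [NormedAddCommGroup X] [NormedSpace ℝ X]
    [∀ j, NormedAddCommGroup (Y j)] [∀ j, NormedSpace ℝ (Y j)] {η : ℝ → ℝ}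
    (h : BPBpWith X (lp Y 1) η) (j : J) : BPBpWith X (Y j) η := by
  classical exact .of_isLSummand (isLSummand_lp_single ℝ Y j) h

/-- If the pair `(X, [⊕ⱼ Yⱼ]_{ℓ₁})` has the BPBp with a function `η`, then every pair
`(X, Yⱼ)` has the BPBp with the same function `η`. -/
theorem bpbp_of_l1_sum_range
    {J : Type*} (X : Type*) (Y : J → Type*)
    [NormedAddCommGroup X] [NormedSpace ℝ X] [CompleteSpace X]
    [∀ j, NormedAddCommGroup (Y j)] [∀ j, NormedSpace ℝ (Y j)] [∀ j, CompleteSpace (Y j)]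
    (η : ℝ → ℝ) (hη : ∀ ε ∈ Set.Ioo (0 : ℝ) 1, 0 < η ε)
    (h : BPBpWith X (lp (fun j => Y j) 1) η) :
    ∀ j : J, BPBpWith X (Y j) η :=
  bpbp_of_l1_sum_range_general h
end

section
/- Let X₁ and X₂ be nontrivial real Banach spaces (each containing a nonzero vector), let X = X₁ ⊕₁ X₂ be their ℓ1-sum, and let Y be a strictly convex real Banach space. If the pair (X,Y) has the Bishop–Phelps–Bollobás property, then Y is uniformly convex. -/
open scoped ENNReal

/-! On `X₁ ⊕₁ X₂` consider the reflection `(a, b) ↦ (a, -b)`. If `Y` is strictly convex and a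
contraction `S` attains its norm at `x = (a, b)`, then the triangle inequality for
`S (a, 0) + S (0, b)` is an equality, so these two vectors lie on a common ray and `S` maps the
reflection of `x` to a vector of norm only `|‖a‖ - ‖b‖|`. By the BPBp, an operator `T` of norm one
almost attaining its norm at a point with two components of equal norm is then small at the
reflected point. Applied to `T (a, b) = f₁ a • y₁ + f₂ b • y₂`, with norming functionals `f₁`, `f₂`,
this says that `‖y₁ - y₂‖` is small as soon as `‖y₁ + y₂‖` is close to `2`. -/

/-- The reflection `(a, b) ↦ (a, -b)` of an `ℓᵖ`-sum, as a linear isometric equivalence. -/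
noncomputable def reflectSnd (p : ℝ≥0∞) [Fact (1 ≤ p)] (𝕜 E F : Type*) [Ring 𝕜]
    [SeminormedAddCommGroup E] [Module 𝕜 E] [SeminormedAddCommGroup F] [Module 𝕜 F] :
    WithLp p (E × F) ≃ₗᵢ[𝕜] WithLp p (E × F) :=
  .withLpProdCongr p (.refl 𝕜 E) (.neg 𝕜)

theorem reflectSnd_toLp (p : ℝ≥0∞) [Fact (1 ≤ p)] (𝕜 : Type*) {E F : Type*} [Ring 𝕜]
    [SeminormedAddCommGroup E] [Module 𝕜 E] [SeminormedAddCommGroup F] [Module 𝕜 F]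
    (a : E) (b : F) :
    reflectSnd p 𝕜 E F (WithLp.toLp p (a, b)) = WithLp.toLp p (a, -b) :=
  rfl

section Coprod

variable {𝕜 E F G : Type*} [NontriviallyNormedField 𝕜]
  [SeminormedAddCommGroup E] [NormedSpace 𝕜 E] [SeminormedAddCommGroup F] [NormedSpace 𝕜 F]
  [SeminormedAddCommGroup G] [NormedSpace 𝕜 G]

/-- The operator `(a, b) ↦ A a + B b` on the `ℓ₁`-sum of the domains of `A` and `B`; this is
`ContinuousLinearMap.coprod` for the `ℓ₁`-norm, which makes its norm the larger of `‖A‖`, `‖B‖`. -/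
noncomputable def l1Coprod (A : E →L[𝕜] G) (B : F →L[𝕜] G) : WithLp 1 (E × F) →L[𝕜] G :=
  A.comp (WithLp.fstL 1 𝕜 E F) + B.comp (WithLp.sndL 1 𝕜 E F)

theorem l1Coprod_toLp (A : E →L[𝕜] G) (B : F →L[𝕜] G) (a : E) (b : F) :
    l1Coprod A B (WithLp.toLp 1 (a, b)) = A a + B b :=
  rfl

theorem norm_l1Coprod (A : E →L[𝕜] G) (B : F →L[𝕜] G) :
    ‖l1Coprod A B‖ = max ‖A‖ ‖B‖ := by
  refine le_antisymm ?_ (max_le ?_ ?_)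
  · refine ContinuousLinearMap.opNorm_le_bound _ (by positivity) ?_
    rintro ⟨a, b⟩
    rw [l1Coprod_toLp]
    calc ‖A a + B b‖ ≤ ‖A‖ * ‖a‖ + ‖B‖ * ‖b‖ :=
          norm_add_le_of_le (A.le_opNorm a) (B.le_opNorm b)
      _ ≤ max ‖A‖ ‖B‖ * ‖a‖ + max ‖A‖ ‖B‖ * ‖b‖ := by
          gcongr
          exacts [le_max_left _ _, le_max_right _ _]
      _ = max ‖A‖ ‖B‖ * ‖WithLp.toLp 1 (a, b)‖ := by
          rw [WithLp.prod_norm_eq_of_L1, WithLp.toLp_fst, WithLp.toLp_snd, mul_add]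
  · refine A.opNorm_le_bound (norm_nonneg _) fun a => ?_
    simpa [l1Coprod_toLp] using (l1Coprod A B).le_opNorm (WithLp.toLp 1 (a, 0))
  · refine B.opNorm_le_bound (norm_nonneg _) fun b => ?_
    simpa [l1Coprod_toLp] using (l1Coprod A B).le_opNorm (WithLp.toLp 1 (0, b))

end Coprod

theorem exists_clm_norm_eq_apply_eq_norm_smul {𝕜 E G : Type*} [RCLike 𝕜]
    [NormedAddCommGroup E] [NormedSpace 𝕜 E] [Nontrivial E]
    [SeminormedAddCommGroup G] [NormedSpace 𝕜 G] (x : E) (y : G) :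
    ∃ A : E →L[𝕜] G, ‖A‖ = ‖y‖ ∧ A x = (‖x‖ : 𝕜) • y := by
  obtain ⟨f, hf, hfx⟩ := exists_dual_vector' 𝕜 x
  refine ⟨f.smulRight y, ?_, ?_⟩
  · rw [ContinuousLinearMap.norm_smulRight_apply, hf, one_mul]
  · rw [ContinuousLinearMap.smulRight_apply, hfx]

section StrictConvex

variable {𝕜 X₁ X₂ Y : Type*} [NontriviallyNormedField 𝕜]
  [SeminormedAddCommGroup X₁] [NormedSpace 𝕜 X₁] [SeminormedAddCommGroup X₂] [NormedSpace 𝕜 X₂]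
  [NormedAddCommGroup Y] [NormedSpace ℝ Y] [StrictConvexSpace ℝ Y]

theorem norm_sub_eq_abs_sub_of_add_le_norm_add {u v : Y} {s t : ℝ} (hu : ‖u‖ ≤ s) (hv : ‖v‖ ≤ t)
    (h : s + t ≤ ‖u + v‖) : ‖u - v‖ = |s - t| := by
  have huv := norm_add_le u v
  obtain rfl : ‖u‖ = s := by linarith
  obtain rfl : ‖v‖ = t := by linarith
  exact sameRay_iff_norm_sub.1 (sameRay_iff_norm_add.2 (huv.antisymm h))

variable [NormedSpace 𝕜 Y]

theorem norm_apply_reflectSnd_eq_abs_sub {S : WithLp 1 (X₁ × X₂) →L[𝕜] Y} (hS : ‖S‖ ≤ 1)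
    {x : WithLp 1 (X₁ × X₂)} (hx : ‖x‖ ≤ ‖S x‖) :
    ‖S (reflectSnd 1 𝕜 X₁ X₂ x)‖ = |‖x.fst‖ - ‖x.snd‖| := by
  obtain ⟨a, b⟩ := x
  have hadd : S (WithLp.toLp 1 (a, b)) = S (WithLp.toLp 1 (a, 0)) + S (WithLp.toLp 1 (0, b)) := by
    simp [← map_add, ← WithLp.toLp_add]
  have hsub : S (reflectSnd 1 𝕜 X₁ X₂ (WithLp.toLp 1 (a, b))) =
      S (WithLp.toLp 1 (a, 0)) - S (WithLp.toLp 1 (0, b)) := by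
    simp [reflectSnd_toLp, ← map_sub, ← WithLp.toLp_sub]
  rw [hsub]
  refine norm_sub_eq_abs_sub_of_add_le_norm_add ?_ ?_ ?_
  · simpa using S.le_of_opNorm_le hS (WithLp.toLp 1 (a, 0))
  · simpa using S.le_of_opNorm_le hS (WithLp.toLp 1 (0, b))
  · rwa [hadd, WithLp.prod_norm_eq_of_L1] at hx

theorem norm_apply_reflectSnd_le_two_mul_norm_sub {S : WithLp 1 (X₁ × X₂) →L[𝕜] Y} (hS : ‖S‖ ≤ 1)
    {x x₀ : WithLp 1 (X₁ × X₂)} (hx : ‖x‖ ≤ ‖S x‖) (hx₀ : ‖x₀.fst‖ = ‖x₀.snd‖) :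
    ‖S (reflectSnd 1 𝕜 X₁ X₂ x₀)‖ ≤ 2 * ‖x - x₀‖ := by
  set σ := reflectSnd 1 𝕜 X₁ X₂
  have hσx : ‖S (σ x)‖ ≤ ‖x - x₀‖ :=
    calc ‖S (σ x)‖ = |(‖x.fst‖ - ‖x₀.fst‖) - (‖x.snd‖ - ‖x₀.snd‖)| := by
          rw [norm_apply_reflectSnd_eq_abs_sub hS hx, hx₀, sub_sub_sub_cancel_right]
      _ ≤ |‖x.fst‖ - ‖x₀.fst‖| + |‖x.snd‖ - ‖x₀.snd‖| := abs_sub _ _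
      _ ≤ ‖x.fst - x₀.fst‖ + ‖x.snd - x₀.snd‖ :=
          add_le_add (abs_norm_sub_norm_le _ _) (abs_norm_sub_norm_le _ _)
      _ = ‖x - x₀‖ := by rw [WithLp.prod_norm_eq_of_L1, WithLp.sub_fst, WithLp.sub_snd]
  have hσsub : ‖S (σ (x - x₀))‖ ≤ ‖x - x₀‖ := by
    simpa only [one_mul, σ.norm_map] using S.le_of_opNorm_le hS (σ (x - x₀))
  calc ‖S (σ x₀)‖ = ‖S (σ x) - S (σ (x - x₀))‖ := by rw [← map_sub, ← map_sub, sub_sub_cancel]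
    _ ≤ ‖x - x₀‖ + ‖x - x₀‖ := norm_sub_le_of_le hσx hσsub
    _ = 2 * ‖x - x₀‖ := (two_mul _).symm

end StrictConvex

namespace BPBpWith

variable {X₁ X₂ Y : Type*} [NormedAddCommGroup X₁] [NormedSpace ℝ X₁]
  [NormedAddCommGroup X₂] [NormedSpace ℝ X₂]
  [NormedAddCommGroup Y] [NormedSpace ℝ Y] [StrictConvexSpace ℝ Y] {η : ℝ → ℝ} {ε : ℝ}

theorem norm_apply_reflectSnd_lt (h : BPBpWith (WithLp 1 (X₁ × X₂)) Y η) (hε : ε ∈ Set.Ioo 0 1)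
    {T : WithLp 1 (X₁ × X₂) →L[ℝ] Y} (hT : ‖T‖ = 1) {x₀ : WithLp 1 (X₁ × X₂)} (hx₀ : ‖x₀‖ = 1)
    (hfst_snd : ‖x₀.fst‖ = ‖x₀.snd‖) (hTx₀ : 1 - η ε < ‖T x₀‖) :
    ‖T (reflectSnd 1 ℝ X₁ X₂ x₀)‖ < 3 * ε := by
  obtain ⟨S, x, hx, hS, hSx, hxx₀, hST⟩ := h ε hε T x₀ hT hx₀ hTx₀
  set z := reflectSnd 1 ℝ X₁ X₂ x₀
  have hz : ‖z‖ = 1 := (LinearIsometryEquiv.norm_map _ _).trans hx₀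
  have hSz : ‖S z‖ ≤ 2 * ‖x - x₀‖ :=
    norm_apply_reflectSnd_le_two_mul_norm_sub hS.le (hx.trans hSx.symm).le hfst_snd
  have hSTz : ‖(S - T) z‖ ≤ ‖S - T‖ := (S - T).unit_le_opNorm z hz.le
  calc ‖T z‖ = ‖S z - (S - T) z‖ := by simp
    _ ≤ 2 * ‖x - x₀‖ + ‖S - T‖ := norm_sub_le_of_le hSz hSTz
    _ < 3 * ε := by linarith

theorem norm_sub_lt_of_lt_norm_add [Nontrivial X₁] [Nontrivial X₂]
    (h : BPBpWith (WithLp 1 (X₁ × X₂)) Y η) (hε : ε ∈ Set.Ioo 0 1) {y₁ y₂ : Y}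
    (hy₁ : ‖y₁‖ = 1) (hy₂ : ‖y₂‖ = 1) (hadd : 2 - 2 * η ε < ‖y₁ + y₂‖) :
    ‖y₁ - y₂‖ < 6 * ε := by
  obtain ⟨a, ha⟩ : ∃ a : X₁, ‖a‖ = 1 / 2 := exists_norm_eq _ (by norm_num)
  obtain ⟨b, hb⟩ : ∃ b : X₂, ‖b‖ = 1 / 2 := exists_norm_eq _ (by norm_num)
  obtain ⟨A, hA, hAa⟩ := exists_clm_norm_eq_apply_eq_norm_smul (𝕜 := ℝ) a y₁
  obtain ⟨B, hB, hBb⟩ := exists_clm_norm_eq_apply_eq_norm_smul (𝕜 := ℝ) b y₂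
  rw [ha, RCLike.ofReal_real_eq_id, id] at hAa
  rw [hb, RCLike.ofReal_real_eq_id, id] at hBb
  have hT : ‖l1Coprod A B‖ = 1 := by rw [norm_l1Coprod, hA, hB, hy₁, hy₂, max_self]
  set x₀ : WithLp 1 (X₁ × X₂) := WithLp.toLp 1 (a, b)
  have hx₀ : ‖x₀‖ = 1 := by
    simp only [x₀, WithLp.prod_norm_eq_of_L1, WithLp.toLp_fst, WithLp.toLp_snd, ha, hb, add_halves]
  have hTx₀ : ‖l1Coprod A B x₀‖ = 1 / 2 * ‖y₁ + y₂‖ := by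
    rw [l1Coprod_toLp, hAa, hBb, ← smul_add, norm_smul_of_nonneg (by norm_num)]
  have hTσx₀ : ‖l1Coprod A B (reflectSnd 1 ℝ X₁ X₂ x₀)‖ = 1 / 2 * ‖y₁ - y₂‖ := by
    rw [reflectSnd_toLp, l1Coprod_toLp, map_neg, hAa, hBb, ← sub_eq_add_neg, ← smul_sub,
      norm_smul_of_nonneg (by norm_num)]
  have hlt := h.norm_apply_reflectSnd_lt hε hT hx₀ (ha.trans hb.symm) (by rw [hTx₀]; linarith)
  linarith

end BPBpWith

theorem uniformConvex_of_bpbp_l1_sum_domain_general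
    (X₁ X₂ Y : Type*)
    [NormedAddCommGroup X₁] [NormedSpace ℝ X₁] [Nontrivial X₁]
    [NormedAddCommGroup X₂] [NormedSpace ℝ X₂] [Nontrivial X₂]
    [NormedAddCommGroup Y] [NormedSpace ℝ Y] [StrictConvexSpace ℝ Y]
    (h : HasBPBp (WithLp 1 (X₁ × X₂)) Y) :
    UniformConvexSpace Y := by
  obtain ⟨η, hη_pos, hη⟩ := h
  refine ⟨fun ε hε => ?_⟩
  obtain ⟨r, hr_pos, hr_lt⟩ : ∃ r, 0 < r ∧ r < min 1 (ε / 6) :=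
    exists_between (lt_min one_pos (by positivity))
  obtain ⟨hr_one, hr_ε⟩ := lt_min_iff.1 hr_lt
  have hr : r ∈ Set.Ioo (0 : ℝ) 1 := ⟨hr_pos, hr_one⟩
  refine ⟨2 * η r, mul_pos two_pos (hη_pos r hr), fun y₁ hy₁ y₂ hy₂ hle => ?_⟩
  by_contra! hlt
  have hclose : ‖y₁ - y₂‖ < 6 * r := hη.norm_sub_lt_of_lt_norm_add hr hy₁ hy₂ hlt
  linarith

/-- If `X = X₁ ⊕₁ X₂` is a nontrivial `ℓ₁`-sum, `Y` is strictly convex and `(X, Y)` has the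
BPBp, then `Y` is uniformly convex. -/
theorem uniformConvex_of_bpbp_l1_sum_domain
    (X₁ X₂ Y : Type*)
    [NormedAddCommGroup X₁] [NormedSpace ℝ X₁] [CompleteSpace X₁] [Nontrivial X₁]
    [NormedAddCommGroup X₂] [NormedSpace ℝ X₂] [CompleteSpace X₂] [Nontrivial X₂]
    [NormedAddCommGroup Y] [NormedSpace ℝ Y] [CompleteSpace Y] [StrictConvexSpace ℝ Y]
    (h : HasBPBp (WithLp 1 (X₁ × X₂)) Y) :
    UniformConvexSpace Y :=
  uniformConvex_of_bpbp_l1_sum_domain_general X₁ X₂ Y h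
end
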